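/- arXiv:1403.4967 — 7 statements merged into one kernel-verified Lean document; each statement's English description precedes it below -/
import Mathlib

section
/- Let (S, ℒ) be a partial linear space and k ≥ 1 an integer. Then the Veronese space V_k(S, ℒ) is again a partial linear space: its block family is nonempty, every block of V_k(S, ℒ) has at least 3 points, and any two distinct points of 𝔶_k(S) belong to at most one common block. -/
def veroBlock {S : Type*} (e : Multiset S) (r : ℕ) (B : Set S) : Set (Multiset S) :=
  { m | ∃ x ∈ B, m = e + Multiset.replicate r x }

def veroBlocks {S : Type*} (k : ℕ) (L : Set (Set S)) : Set (Set (Multiset S)) :=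
  { Bl | ∃ (r : ℕ) (e : Multiset S) (B : Set S),
      0 < r ∧ r ≤ k ∧ Multiset.card e = k - r ∧ B ∈ L ∧ Bl = veroBlock e r B }

def veroPoints (S : Type*) (k : ℕ) : Set (Multiset S) :=
  { m | Multiset.card m = k }

def veroLeaves (S : Type*) (k : ℕ) : Set (Set (Multiset S)) :=
  { T | ∃ (r : ℕ) (e : Multiset S),
      0 < r ∧ r ≤ k ∧ Multiset.card e = k - r ∧ T = veroBlock e r Set.univ }

def VerAdj {S : Type*} (k : ℕ) (L : Set (Set S)) (f g : Multiset S) : Prop :=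
  ∃ Bl ∈ veroBlocks k L, f ∈ Bl ∧ g ∈ Bl

def AtLeastThree {α : Type*} (B : Set α) : Prop :=
  ∃ a b c, a ∈ B ∧ b ∈ B ∧ c ∈ B ∧ a ≠ b ∧ a ≠ c ∧ b ≠ c

def IsPLS {α : Type*} (L : Set (Set α)) : Prop :=
  L.Nonempty ∧ (∀ B ∈ L, AtLeastThree B) ∧
    ∀ p q : α, p ≠ q → ∀ B₁ ∈ L, ∀ B₂ ∈ L,
      p ∈ B₁ → q ∈ B₁ → p ∈ B₂ → q ∈ B₂ → B₁ = B₂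

def IsLinearSpace {α : Type*} (L : Set (Set α)) : Prop :=
  IsPLS L ∧ ∀ p q : α, p ≠ q → ∃ B ∈ L, p ∈ B ∧ q ∈ B

def IsSubspace {α : Type*} (Blk : Set (Set α)) (X : Set α) : Prop :=
  ∀ B ∈ Blk, (∃ p ∈ B ∩ X, ∃ q ∈ B ∩ X, p ≠ q) → B ⊆ X

def IsHyperplane {α : Type*} (L : Set (Set α)) (X : Set α) : Prop :=
  IsSubspace L X ∧ (∀ B ∈ L, (B ∩ X).Nonempty) ∧ X ≠ Set.univ

def Veblenian {α : Type*} (L : Set (Set α)) : Prop :=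
  ∀ (p : α) (L₁ L₂ M₁ M₂ : Set α), L₁ ∈ L → L₂ ∈ L → M₁ ∈ L → M₂ ∈ L →
    L₁ ≠ L₂ → L₁ ≠ M₁ → L₁ ≠ M₂ → L₂ ≠ M₁ → L₂ ≠ M₂ → M₁ ≠ M₂ →
    p ∈ L₁ → p ∈ L₂ → p ∉ M₁ → p ∉ M₂ →
    (L₁ ∩ M₁).Nonempty → (L₁ ∩ M₂).Nonempty →
    (L₂ ∩ M₁).Nonempty → (L₂ ∩ M₂).Nonempty →
    (M₁ ∩ M₂).Nonempty

def IsVeroHyperplane {S : Type*} (k : ℕ) (L : Set (Set S)) (X : Set (Multiset S)) : Prop :=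
  X ⊆ veroPoints S k ∧ X ≠ veroPoints S k ∧
    IsSubspace (veroBlocks k L) X ∧ ∀ B ∈ veroBlocks k L, (B ∩ X).Nonempty

def addPt {S : Type*} (a : S) (m : Set S) : Set (Multiset S) :=
  { t | ∃ x ∈ m, t = ({a, x} : Multiset S) }

def dbl {S : Type*} (m : Set S) : Set (Multiset S) :=
  { t | ∃ x ∈ m, t = ({x, x} : Multiset S) }

/-!
The main point is that two distinct points `f = e + r·x` and `g = e + r·y` of a Veronese block
determine it: since `x ≠ y`, the multisets `r·x` and `r·y` are disjoint, so `f ∩ g = e`. Cancelling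
`e` from `f` and from `g` recovers `r`, `x` and `y`, and the line through `x` and `y` is unique.
-/

theorem add_replicate_inter_add_replicate {α : Type*} [DecidableEq α] (e : Multiset α) (n : ℕ)
    {x y : α} (hxy : x ≠ y) :
    (e + Multiset.replicate n x) ∩ (e + Multiset.replicate n y) = e := by
  rw [← Multiset.add_inter_distrib, Multiset.replicate_inter, Multiset.count_replicate,
    if_neg hxy.symm, Nat.min_zero, Multiset.replicate_zero, add_zero]

theorem eq_and_eq_of_replicate_eq_replicate {α : Type*} {m n : ℕ} {x y : α} (hm : m ≠ 0)
    (h : Multiset.replicate m x = Multiset.replicate n y) : m = n ∧ x = y := by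
  obtain rfl : m = n := by simpa only [Multiset.card_replicate] using congrArg Multiset.card h
  exact ⟨rfl, (Multiset.replicate_right_inj hm).1 h⟩

theorem AtLeastThree.image {α β : Type*} {B : Set α} {f : α → β} (hB : AtLeastThree B)
    (hf : Set.InjOn f B) : AtLeastThree (f '' B) := by
  obtain ⟨a, b, c, ha, hb, hc, hab, hac, hbc⟩ := hB
  exact ⟨f a, f b, f c, Set.mem_image_of_mem f ha, Set.mem_image_of_mem f hb,
    Set.mem_image_of_mem f hc, hf.ne ha hb hab, hf.ne ha hc hac, hf.ne hb hc hbc⟩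

theorem IsPLS.eq_of_nontrivial_inter {α : Type*} {L : Set (Set α)} (hL : IsPLS L) {B C : Set α}
    (hB : B ∈ L) (hC : C ∈ L) (hBC : (B ∩ C).Nontrivial) : B = C := by
  obtain ⟨p, ⟨hpB, hpC⟩, q, ⟨hqB, hqC⟩, hpq⟩ := hBC
  exact hL.2.2 p q hpq B hB C hC hpB hqB hpC hqC

section Veronese

variable {S : Type*} {e d : Multiset S} {r s k : ℕ} {B C : Set S} {L : Set (Set S)}

theorem veroBlock_eq_image (e : Multiset S) (r : ℕ) (B : Set S) :
    veroBlock e r B = (fun x ↦ e + Multiset.replicate r x) '' B :=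
  Set.ext fun _ ↦ exists_congr fun _ ↦ and_congr_right fun _ ↦ eq_comm

theorem AtLeastThree.veroBlock (hB : AtLeastThree B) (e : Multiset S) (hr : r ≠ 0) :
    AtLeastThree (veroBlock e r B) := by
  rw [veroBlock_eq_image]
  exact hB.image ((add_right_injective e).comp (Multiset.replicate_right_injective hr)).injOn

theorem veroBlocks_nonempty [Nonempty S] (hL : L.Nonempty) (hk : 1 ≤ k) :
    (veroBlocks k L).Nonempty := by
  obtain ⟨B, hB⟩ := hL
  let x := Classical.arbitrary S
  exact ⟨_, 1, Multiset.replicate (k - 1) x, B, one_pos, hk, Multiset.card_replicate _ _, hB, rfl⟩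

theorem eq_and_eq_and_nontrivial_inter_of_veroBlock_inter
    (h : (veroBlock e r B ∩ veroBlock d s C).Nontrivial) :
    e = d ∧ r = s ∧ (B ∩ C).Nontrivial := by
  classical
  obtain ⟨f, ⟨⟨x, hxB, hfx⟩, z, hzC, hfz⟩, g, ⟨⟨y, hyB, hgy⟩, w, hwC, hgw⟩, hfg⟩ := h
  have hxy : x ≠ y := by
    rintro rfl
    exact hfg (hfx.trans hgy.symm)
  have hzw : z ≠ w := by
    rintro rfl
    exact hfg (hfz.trans hgw.symm)
  have hr : r ≠ 0 := by
    rintro rfl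
    exact hfg (hfx.trans hgy.symm)
  obtain rfl : e = d := calc
    e = f ∩ g := by rw [hfx, hgy, add_replicate_inter_add_replicate e r hxy]
    _ = d := by rw [hfz, hgw, add_replicate_inter_add_replicate d s hzw]
  obtain ⟨rfl, rfl⟩ :=
    eq_and_eq_of_replicate_eq_replicate hr (add_left_cancel (hfx.symm.trans hfz))
  obtain ⟨-, rfl⟩ :=
    eq_and_eq_of_replicate_eq_replicate hr (add_left_cancel (hgy.symm.trans hgw))
  exact ⟨rfl, rfl, x, ⟨hxB, hzC⟩, y, ⟨hyB, hwC⟩, hxy⟩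

end Veronese

theorem stmt_0 {S : Type*} (ℒ : Set (Set S)) (hL : IsPLS ℒ) (k : ℕ) (hk : 1 ≤ k) :
    (veroBlocks k ℒ).Nonempty ∧
    (∀ Bl ∈ veroBlocks k ℒ, AtLeastThree Bl) ∧
    (∀ f g : Multiset S, f ∈ veroPoints S k → g ∈ veroPoints S k → f ≠ g →
      ∀ B₁ ∈ veroBlocks k ℒ, ∀ B₂ ∈ veroBlocks k ℒ,
        f ∈ B₁ → g ∈ B₁ → f ∈ B₂ → g ∈ B₂ → B₁ = B₂) := by
  refine ⟨?_, ?_, ?_⟩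
  · obtain ⟨B, hB⟩ := hL.1
    obtain ⟨a, -⟩ := hL.2.1 B hB
    have : Nonempty S := ⟨a⟩
    exact veroBlocks_nonempty ⟨B, hB⟩ hk
  · rintro _ ⟨r, e, B, hr, -, -, hB, rfl⟩
    exact (hL.2.1 B hB).veroBlock e hr.ne'
  · rintro f g - - hfg _ ⟨r, e, B, -, -, -, hB, rfl⟩ _ ⟨s, d, C, -, -, -, hC, rfl⟩ hfB hgB hfC hgC
    obtain ⟨rfl, rfl, hBC⟩ :=
      eq_and_eq_and_nontrivial_inter_of_veroBlock_inter ⟨f, ⟨hfB, hfC⟩, g, ⟨hgB, hgC⟩, hfg⟩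
    rw [hL.eq_of_nontrivial_inter hB hC hBC]
end

section
/- Let (S, ℬ) be an incidence structure, where ℬ is a family of subsets of S, and let k ≥ 1. Let B = {e₀ + r·x : x ∈ B₀} be a block of V_k(S, ℬ), where 0 < r ≤ k, e₀ ∈ 𝔶_{k-r}(S), B₀ ∈ ℬ, and let T(B) = {e₀ + r·x : x ∈ S} be the leaf containing B. If a point f ∈ 𝔶_k(S) is adjacent in V_k(S, ℬ) to at least three pairwise distinct points of B, then f ∈ T(B). -/
/-!
Write `f - e₀` for the difference of two multisets in the free abelian group on `S`. If `f` is
adjacent to `e₀ + r·x`, then `f - e₀ = r·x + s·u - s·v` for some `s > 0`. When `f` lies outside the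
leaf, `x` is in the support of `f - e₀`, so three such points `x` exhaust a support
`{x, u, v}` of size three. Hence `v`, where the coefficient is `-s < 0`, is itself one of these
points; but a negative coefficient at `x` forces `v = x`, and then the support has at most two
elements.
-/

section MassTransfer

open Finsupp

/-- `d` arises from the point mass `r` at `x` by moving a positive mass from `v` to `u`. The case
`u = v`, in which nothing changes, is allowed, and `d` may become negative at `v`. -/
def IsMassTransfer {S G : Type*} [AddCommGroup G] [LT G] (d : S →₀ G) (r : G) (x u v : S) : Prop :=
  ∃ s : G, 0 < s ∧ d = single x r + single u s - single v s

namespace IsMassTransfer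

variable {S G : Type*} [AddCommGroup G] {r : G} {x u v : S} {d : S →₀ G}

theorem support_subset [LT G] [DecidableEq S] (h : IsMassTransfer d r x u v) :
    d.support ⊆ {x, u, v} := by
  obtain ⟨s, -, rfl⟩ := h
  intro z hz
  contrapose! hz
  simp only [Finset.mem_insert, Finset.mem_singleton, not_or] at hz
  obtain ⟨hzx, hzu, hzv⟩ := hz
  simp [hzx, hzu, hzv]

theorem eq_single_of_eq [LT G] (h : IsMassTransfer d r x u v) (huv : u = v) : d = single x r := by
  obtain ⟨s, -, rfl⟩ := h
  rw [huv, add_sub_cancel_right]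

theorem card_support_le_two_of_eq [LT G] (h : IsMassTransfer d r x u v) (hxv : x = v) :
    d.support.card ≤ 2 := by
  classical
  subst hxv
  calc
    d.support.card ≤ ({x, u, x} : Finset S).card := Finset.card_le_card h.support_subset
    _ = ({x, u} : Finset S).card := by rw [Finset.pair_comm, Finset.insert_idem]
    _ ≤ 2 := Finset.card_le_two

variable [PartialOrder G] [IsOrderedAddMonoid G]

theorem apply_neg (h : IsMassTransfer d r x u v) (hxv : x ≠ v) (huv : u ≠ v) : d v < 0 := by
  obtain ⟨s, hs, rfl⟩ := h
  simpa [single_eq_of_ne' hxv, single_eq_of_ne' huv] using hs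

theorem eq_of_apply_nonpos (h : IsMassTransfer d r x u v) (hr : 0 < r) (hx : d x ≤ 0) :
    x = v := by
  obtain ⟨s, hs, rfl⟩ := h
  by_contra hxv
  have hu : 0 ≤ single u s x := single_nonneg.2 hs.le x
  refine (add_pos_of_pos_of_nonneg hr hu).not_ge ?_
  simpa [single_eq_of_ne hxv] using hx

theorem exists_eq_single_of_apply_eq_zero (h : IsMassTransfer d r x u v) (hr : 0 < r)
    (hx : d x = 0) : ∃ y, d = single y r := by
  obtain rfl : x = v := h.eq_of_apply_nonpos hr hx.le
  by_cases hux : u = x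
  · exact ⟨x, h.eq_single_of_eq hux⟩
  · obtain ⟨s, -, rfl⟩ := h
    have hrs : r = s := by simpa [single_eq_of_ne' hux, sub_eq_zero] using hx
    exact ⟨u, by rw [hrs, add_sub_cancel_left]⟩

theorem exists_eq_single_of_two_lt_card {A : Finset S} (hr : 0 < r) (hA : 2 < A.card)
    (h : ∀ x ∈ A, ∃ u v, IsMassTransfer d r x u v) : ∃ y, d = single y r := by
  classical
  by_contra hd
  have hAd : A ⊆ d.support := fun x hx ↦ by
    obtain ⟨u, v, hxuv⟩ := h x hx
    exact mem_support_iff.2 fun h0 ↦ hd (hxuv.exists_eq_single_of_apply_eq_zero hr h0)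
  have hd_card : 2 < d.support.card := hA.trans_le (Finset.card_le_card hAd)
  obtain ⟨x, hx⟩ := Finset.card_pos.1 (two_pos.trans hA)
  obtain ⟨u, v, hxuv⟩ := h x hx
  have hA_eq : A = {x, u, v} :=
    Finset.eq_of_subset_of_card_le (hAd.trans hxuv.support_subset) (Finset.card_le_three.trans hA)
  have huv : u ≠ v := fun huv ↦ hd ⟨x, hxuv.eq_single_of_eq huv⟩
  have hxv : x ≠ v := fun hxv ↦ hd_card.not_ge (hxuv.card_support_le_two_of_eq hxv)
  obtain ⟨u', v', hv⟩ := h v (by simp [hA_eq])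
  have hvv' : v = v' := hv.eq_of_apply_nonpos hr (hxuv.apply_neg hxv huv).le
  exact hd_card.not_ge (hv.card_support_le_two_of_eq hvv')

end IsMassTransfer

end MassTransfer

section IntCount

variable {S : Type*} [DecidableEq S]

/-- The embedding of multisets into the free abelian group on `S`, sending a multiset to its
multiplicity function, so that multisets can be subtracted without truncation. -/
noncomputable def intCount : Multiset S →+ (S →₀ ℤ) :=
  (Finsupp.mapRange.addMonoidHom (Nat.castAddMonoidHom ℤ)).comp Multiset.toFinsupp.toAddMonoidHom

theorem intCount_injective : Function.Injective (intCount : Multiset S →+ (S →₀ ℤ)) :=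
  (Finsupp.mapRange_injective _ Nat.cast_zero Nat.cast_injective).comp Multiset.toFinsupp.injective

theorem intCount_replicate (n : ℕ) (x : S) :
    intCount (Multiset.replicate n x) = Finsupp.single x (n : ℤ) := by
  simp [intCount, ← Multiset.nsmul_singleton]

theorem VerAdj.exists_isMassTransfer {k r : ℕ} {L : Set (Set S)} {e f : Multiset S} {x : S}
    (h : VerAdj k L f (e + Multiset.replicate r x)) :
    ∃ u v, IsMassTransfer (intCount f - intCount e) (r : ℤ) x u v := by
  obtain ⟨_, ⟨s, e', B, hs, -, -, -, rfl⟩, ⟨u, -, hu⟩, ⟨v, -, hv⟩⟩ := h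
  have hf := congrArg intCount hu
  have hp := congrArg intCount hv
  simp only [map_add, intCount_replicate] at hf hp
  refine ⟨u, v, s, by exact_mod_cast hs, ?_⟩
  rw [hf, eq_sub_of_add_eq hp]
  abel

end IntCount

theorem veroBlock_mono {S : Type*} (e : Multiset S) (r : ℕ) {B C : Set S} (h : B ⊆ C) :
    veroBlock e r B ⊆ veroBlock e r C :=
  fun _ ⟨x, hx, hm⟩ ↦ ⟨x, h hx, hm⟩

theorem stmt_2_general {S : Type*} {ℬ : Set (Set S)} {k : ℕ} {T : Set (Multiset S)}
    {f p₁ p₂ p₃ : Multiset S} (hT : T ∈ veroLeaves S k)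
    (hp₁ : p₁ ∈ T) (hp₂ : p₂ ∈ T) (hp₃ : p₃ ∈ T) (h12 : p₁ ≠ p₂) (h13 : p₁ ≠ p₃) (h23 : p₂ ≠ p₃)
    (ha₁ : VerAdj k ℬ f p₁) (ha₂ : VerAdj k ℬ f p₂) (ha₃ : VerAdj k ℬ f p₃) : f ∈ T := by
  classical
  obtain ⟨r, e₀, hr, -, -, rfl⟩ := hT
  obtain ⟨x₁, -, rfl⟩ := hp₁
  obtain ⟨x₂, -, rfl⟩ := hp₂
  obtain ⟨x₃, -, rfl⟩ := hp₃
  have hcard : 2 < ({x₁, x₂, x₃} : Finset S).card := by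
    let leafPoint (x : S) := e₀ + Multiset.replicate r x
    exact Finset.two_lt_card.2 ⟨x₁, by simp, x₂, by simp, x₃, by simp,
      ne_of_apply_ne leafPoint h12, ne_of_apply_ne leafPoint h13, ne_of_apply_ne leafPoint h23⟩
  obtain ⟨y, hy⟩ : ∃ y, intCount f - intCount e₀ = Finsupp.single y (r : ℤ) :=
    IsMassTransfer.exists_eq_single_of_two_lt_card (by exact_mod_cast hr) hcard <| by
      simp [ha₁.exists_isMassTransfer, ha₂.exists_isMassTransfer, ha₃.exists_isMassTransfer]
  refine ⟨y, Set.mem_univ y, intCount_injective ?_⟩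
  rw [map_add, intCount_replicate, ← hy, add_sub_cancel]

theorem stmt_2 {S : Type*} (ℬ : Set (Set S)) (k r : ℕ) (hr : 0 < r) (hrk : r ≤ k)
    (e₀ : Multiset S) (he₀ : Multiset.card e₀ = k - r)
    (B₀ : Set S) (hB₀ : B₀ ∈ ℬ)
    (f p₁ p₂ p₃ : Multiset S) (hf : f ∈ veroPoints S k)
    (hp₁ : p₁ ∈ veroBlock e₀ r B₀) (hp₂ : p₂ ∈ veroBlock e₀ r B₀)
    (hp₃ : p₃ ∈ veroBlock e₀ r B₀)
    (h12 : p₁ ≠ p₂) (h13 : p₁ ≠ p₃) (h23 : p₂ ≠ p₃)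
    (ha₁ : VerAdj k ℬ f p₁) (ha₂ : VerAdj k ℬ f p₂) (ha₃ : VerAdj k ℬ f p₃) :
    f ∈ veroBlock e₀ r Set.univ := by
  have hsub := veroBlock_mono e₀ r (Set.subset_univ B₀)
  exact stmt_2_general ⟨r, e₀, hr, hrk, he₀, rfl⟩ (hsub hp₁) (hsub hp₂) (hsub hp₃) h12 h13 h23
    ha₁ ha₂ ha₃
end

section
/- If a partial linear space (S, ℒ) is veblenian, then the Veronese space V_2(S, ℒ) is veblenian as well. -/
/-!
The blocks of `V_2(S, ℒ)` lie in leaves, which are copies of `S`: the leaf `a + S` for each `a : S`,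
and the leaf `2 · S`. Two distinct leaves share exactly one point. Hence three pairwise meeting
blocks without a common point lie either in one leaf or in three distinct ones. An incomplete Veblen
configuration contains the two such triangles `L₁ L₂ M₁` and `L₁ L₂ M₂`, so its blocks lie in one
leaf, where the claim is that for `ℒ`; or `M₁` and `M₂` share a leaf, and meet where `L₁` crosses
it; or the four leaves are distinct. In the last case the five given intersections force the four
underlying lines to coincide, and the sixth intersection follows.
-/

theorem Veblenian.image_of_injective {α β : Type*} {ℒ : Set (Set α)} (hVeb : Veblenian ℒ)
    {f : α → β} (hf : f.Injective) : Veblenian ((f '' ·) '' ℒ) := by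
  rintro _ _ _ _ _ ⟨A, hA, rfl⟩ ⟨B, hB, rfl⟩ ⟨C, hC, rfl⟩ ⟨D, hD, rfl⟩
    hAB hAC hAD hBC hBD hCD ⟨p, hpA, rfl⟩ hpB hpC hpD
  simp only [hf.mem_set_image, hf.image_injective.ne_iff, ← Set.image_inter hf,
    Set.image_nonempty] at *
  exact hVeb p A B C D hA hB hC hD hAB hAC hAD hBC hBD hCD hpA hpB hpC hpD

theorem IsPLS.pairwise_subsingleton_inter {α : Type*} {ℒ : Set (Set α)} (hℒ : IsPLS ℒ) :
    ℒ.Pairwise fun A B ↦ (A ∩ B).Subsingleton := by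
  intro A hA B hB hAB p hp q hq
  by_contra hpq
  exact hAB (hℒ.2.2 p q hpq A hA B hB hp.1 hq.1 hp.2 hq.2)

theorem multiset_pair_eq_pair_iff {α : Type*} {a b c d : α} :
    ({a, b} : Multiset α) = {c, d} ↔ a = c ∧ b = d ∨ a = d ∧ b = c := by
  rw [← Sym2.eq_iff, ← (Sym2.equivMultiset α).injective.eq_iff, Subtype.ext_iff]
  rfl

section Veronese

variable {S : Type*} {ℒ : Set (Set S)} {A B C D : Set S} {i j k l : Option S}

/-- The point with coordinate `x` on a leaf of the Veronese space `V_2`. Leaves are indexed by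
`Option S`: the leaf `some a` consists of the multisets `{a, x}`, the leaf `none` of the multisets
`{x, x}`. -/
def leafPoint (i : Option S) (x : S) : Multiset S :=
  {i.getD x, x}

theorem exists_eq_leafPoint_image_of_mem_veroBlocks {X : Set (Multiset S)}
    (hX : X ∈ veroBlocks 2 ℒ) : ∃ i, ∃ A ∈ ℒ, X = leafPoint i '' A := by
  obtain ⟨r, e, A, hr_pos, hr_le, he, hA, rfl⟩ := hX
  obtain rfl | rfl : r = 1 ∨ r = 2 := by omega
  · obtain ⟨a, rfl⟩ := Multiset.card_eq_one.1 he
    refine ⟨some a, A, hA, Set.ext fun m ↦ ?_⟩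
    simp [veroBlock, leafPoint, eq_comm]
  · obtain rfl := Multiset.card_eq_zero.1 he
    refine ⟨none, A, hA, Set.ext fun m ↦ ?_⟩
    simp [veroBlock, leafPoint, Multiset.replicate_succ, eq_comm]

theorem leafPoint_injective (i : Option S) : (leafPoint i).Injective := by
  intro x y h
  cases i <;> simp only [leafPoint, multiset_pair_eq_pair_iff, Option.getD] at h <;> grind

-- `j.or i` is the coordinate, on the leaf `i`, of the point it shares with the leaf `j`.
theorem leafPoint_eq_leafPoint_iff (hij : i ≠ j) {x y : S} :
    leafPoint i x = leafPoint j y ↔ j.or i = some x ∧ i.or j = some y := by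
  cases i <;> cases j <;>
    simp only [leafPoint, multiset_pair_eq_pair_iff, Option.getD] <;> grind

theorem leafPoint_image_inter_nonempty_iff (hij : i ≠ j) :
    (leafPoint i '' A ∩ leafPoint j '' B).Nonempty ↔ j.or i ∈ some '' A ∧ i.or j ∈ some '' B := by
  constructor
  · rintro ⟨_, ⟨x, hx, rfl⟩, y, hy, hxy⟩
    obtain ⟨hx', hy'⟩ := (leafPoint_eq_leafPoint_iff hij).1 hxy.symm
    exact ⟨⟨x, hx, hx'.symm⟩, y, hy, hy'.symm⟩
  · rintro ⟨⟨x, hx, hx'⟩, y, hy, hy'⟩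
    have hxy := (leafPoint_eq_leafPoint_iff hij).2 ⟨hx'.symm, hy'.symm⟩
    exact ⟨leafPoint i x, ⟨x, hx, rfl⟩, y, hy, hxy.symm⟩

theorem subsingleton_leafPoint_image_inter (hij : i ≠ j) (A B : Set S) :
    (leafPoint i '' A ∩ leafPoint j '' B).Subsingleton := by
  rintro _ ⟨⟨x, -, rfl⟩, y, -, hxy⟩ _ ⟨⟨x', -, rfl⟩, y', -, hxy'⟩
  have hx := ((leafPoint_eq_leafPoint_iff hij).1 hxy.symm).1
  have hx' := ((leafPoint_eq_leafPoint_iff hij).1 hxy'.symm).1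
  rw [Option.some.inj (hx.symm.trans hx')]

theorem pairwise_subsingleton_inter_veroBlocks_two
    (hℒ : ℒ.Pairwise fun A B ↦ (A ∩ B).Subsingleton) :
    (veroBlocks 2 ℒ).Pairwise fun X Y ↦ (X ∩ Y).Subsingleton := by
  intro X hX Y hY hXY
  obtain ⟨i, A, hA, rfl⟩ := exists_eq_leafPoint_image_of_mem_veroBlocks hX
  obtain ⟨j, B, hB, rfl⟩ := exists_eq_leafPoint_image_of_mem_veroBlocks hY
  obtain rfl | hij := eq_or_ne i j
  · rw [← Set.image_inter (leafPoint_injective i)]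
    exact (hℒ hA hB fun hAB ↦ hXY (congrArg _ hAB)).image _
  · exact subsingleton_leafPoint_image_inter hij A B

theorem leafPoint_image_inter_inter_nonempty (hik : i ≠ k)
    (hAC : (leafPoint i '' A ∩ leafPoint k '' C).Nonempty)
    (hBC : (leafPoint i '' B ∩ leafPoint k '' C).Nonempty) :
    (leafPoint i '' A ∩ leafPoint i '' B ∩ leafPoint k '' C).Nonempty := by
  obtain ⟨u, huA, huC⟩ := hAC
  obtain ⟨v, hvB, hvC⟩ := hBC
  obtain rfl : u = v := subsingleton_leafPoint_image_inter hik (A ∪ B) C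
    ⟨Set.image_mono Set.subset_union_left huA, huC⟩
    ⟨Set.image_mono Set.subset_union_right hvB, hvC⟩
  exact ⟨u, ⟨huA, hvB⟩, huC⟩

theorem leaves_eq_or_pairwise_ne_of_triangle
    (hAB : (leafPoint i '' A ∩ leafPoint j '' B).Nonempty)
    (hAC : (leafPoint i '' A ∩ leafPoint k '' C).Nonempty)
    (hBC : (leafPoint j '' B ∩ leafPoint k '' C).Nonempty)
    (hABC : ¬ (leafPoint i '' A ∩ leafPoint j '' B ∩ leafPoint k '' C).Nonempty) :
    i = j ∧ i = k ∨ i ≠ j ∧ i ≠ k ∧ j ≠ k := by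
  obtain rfl | hij := eq_or_ne i j
  · by_cases hik : i = k
    · exact .inl ⟨rfl, hik⟩
    · exact absurd (leafPoint_image_inter_inter_nonempty hik hAC hBC) hABC
  · refine .inr ⟨hij, ?_, ?_⟩ <;> rintro rfl <;> refine hABC ?_
    · rw [Set.inter_right_comm]
      exact leafPoint_image_inter_inter_nonempty hij hAB (Set.inter_comm _ _ ▸ hBC)
    · rw [Set.inter_assoc, Set.inter_comm]
      rw [Set.inter_comm] at hAB hAC
      exact leafPoint_image_inter_inter_nonempty hij.symm hAB hAC

theorem or_mem_of_or_mem {s : Set (Option S)} (hij : i ≠ j) (hi : i.or k ∈ s) (hj : j.or k ∈ s) :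
    i.or j ∈ s := by
  cases i <;> cases j <;> simp_all

theorem or_right_ne_or_right (hij : i ≠ j) (hik : i ≠ k) (hjk : j ≠ k) : i.or k ≠ j.or k := by
  cases i <;> cases j <;> simp_all [eq_comm]

theorem eq_of_mem_image_some (hℒ : ℒ.Pairwise fun A B ↦ (A ∩ B).Subsingleton)
    (hA : A ∈ ℒ) (hB : B ∈ ℒ) {u v : Option S} (huv : u ≠ v)
    (huA : u ∈ some '' A) (hvA : v ∈ some '' A) (huB : u ∈ some '' B) (hvB : v ∈ some '' B) :
    A = B := by
  by_contra hAB
  have hsub := (hℒ hA hB hAB).image some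
  rw [Set.image_inter (Option.some_injective S)] at hsub
  exact huv (hsub ⟨huA, huB⟩ ⟨hvA, hvB⟩)

theorem eq_of_or_mem_of_four_leaves (hℒ : ℒ.Pairwise fun A B ↦ (A ∩ B).Subsingleton)
    (hA : A ∈ ℒ) (hB : B ∈ ℒ) (hik : i ≠ k) (hil : i ≠ l) (hkl : k ≠ l)
    (hAk : k.or i ∈ some '' A) (hAl : l.or i ∈ some '' A)
    (hBi : i.or j ∈ some '' B) (hBk : k.or j ∈ some '' B) (hBl : l.or j ∈ some '' B) : A = B :=
  eq_of_mem_image_some hℒ hA hB (or_right_ne_or_right hkl hik.symm hil.symm) hAk hAl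
    (or_mem_of_or_mem hik.symm hBk hBi) (or_mem_of_or_mem hil.symm hBl hBi)

theorem eq_of_or_mem_of_three_leaves (hℒ : ℒ.Pairwise fun A B ↦ (A ∩ B).Subsingleton)
    (hA : A ∈ ℒ) (hC : C ∈ ℒ) (hij : i ≠ j) (hik : i ≠ k) (hjk : j ≠ k)
    (hAij : i.or j ∈ some '' A) (hAji : j.or i ∈ some '' A)
    (hAki : k.or i ∈ some '' A) (hAkj : k.or j ∈ some '' A)
    (hCi : i.or k ∈ some '' C) (hCj : j.or k ∈ some '' C) : C = A :=
  eq_of_mem_image_some hℒ hC hA (or_right_ne_or_right hij hik hjk) hCi hCj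
    (or_mem_of_or_mem hik hAij hAkj) (or_mem_of_or_mem hjk hAji hAki)

theorem leafPoint_image_inter_nonempty_of_four_leaves
    (hℒ : ℒ.Pairwise fun A B ↦ (A ∩ B).Subsingleton)
    (hA : A ∈ ℒ) (hB : B ∈ ℒ) (hC : C ∈ ℒ) (hD : D ∈ ℒ)
    (hij : i ≠ j) (hik : i ≠ k) (hil : i ≠ l) (hjk : j ≠ k) (hjl : j ≠ l) (hkl : k ≠ l)
    (hAB : (leafPoint i '' A ∩ leafPoint j '' B).Nonempty)
    (hAC : (leafPoint i '' A ∩ leafPoint k '' C).Nonempty)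
    (hAD : (leafPoint i '' A ∩ leafPoint l '' D).Nonempty)
    (hBC : (leafPoint j '' B ∩ leafPoint k '' C).Nonempty)
    (hBD : (leafPoint j '' B ∩ leafPoint l '' D).Nonempty) :
    (leafPoint k '' C ∩ leafPoint l '' D).Nonempty := by
  obtain ⟨hAj, hBi⟩ := (leafPoint_image_inter_nonempty_iff hij).1 hAB
  obtain ⟨hAk, hCi⟩ := (leafPoint_image_inter_nonempty_iff hik).1 hAC
  obtain ⟨hAl, hDi⟩ := (leafPoint_image_inter_nonempty_iff hil).1 hAD
  obtain ⟨hBk, hCj⟩ := (leafPoint_image_inter_nonempty_iff hjk).1 hBC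
  obtain ⟨hBl, hDj⟩ := (leafPoint_image_inter_nonempty_iff hjl).1 hBD
  obtain rfl : A = B := eq_of_or_mem_of_four_leaves hℒ hA hB hik hil hkl hAk hAl hBi hBk hBl
  obtain rfl : C = A := eq_of_or_mem_of_three_leaves hℒ hA hC hij hik hjk hBi hAj hAk hBk hCi hCj
  obtain rfl : D = C := eq_of_or_mem_of_three_leaves hℒ hA hD hij hil hjl hBi hAj hAl hBl hDi hDj
  exact (leafPoint_image_inter_nonempty_iff hkl).2
    ⟨or_mem_of_or_mem hkl.symm hAl hAk, or_mem_of_or_mem hkl hAk hAl⟩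

end Veronese

theorem stmt_3_general {S : Type*} (ℒ : Set (Set S))
    (hℒ : ℒ.Pairwise fun A B ↦ (A ∩ B).Subsingleton) (hVeb : Veblenian ℒ) :
    Veblenian (veroBlocks 2 ℒ) := by
  intro p L₁ L₂ M₁ M₂ hL₁ hL₂ hM₁ hM₂ hL hLM₁₁ hLM₁₂ hLM₂₁ hLM₂₂ hM hpL₁ hpL₂ hpM₁ hpM₂
    h₁₁ h₁₂ h₂₁ h₂₂
  have not_concurrent {M} (hpM : p ∉ M) : ¬ (L₁ ∩ L₂ ∩ M).Nonempty := fun ⟨q, hqL, hqM⟩ ↦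
    hpM (pairwise_subsingleton_inter_veroBlocks_two hℒ hL₁ hL₂ hL ⟨hpL₁, hpL₂⟩ hqL ▸ hqM)
  obtain ⟨i, A, hA, rfl⟩ := exists_eq_leafPoint_image_of_mem_veroBlocks hL₁
  obtain ⟨j, B, hB, rfl⟩ := exists_eq_leafPoint_image_of_mem_veroBlocks hL₂
  obtain ⟨k, C, hC, rfl⟩ := exists_eq_leafPoint_image_of_mem_veroBlocks hM₁
  obtain ⟨l, D, hD, rfl⟩ := exists_eq_leafPoint_image_of_mem_veroBlocks hM₂
  have hp : (leafPoint i '' A ∩ leafPoint j '' B).Nonempty := ⟨p, hpL₁, hpL₂⟩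
  obtain ⟨rfl, rfl⟩ | ⟨hij, hik, hjk⟩ :=
      leaves_eq_or_pairwise_ne_of_triangle hp h₁₁ h₂₁ (not_concurrent hpM₁) <;>
    obtain ⟨hij', rfl⟩ | ⟨hij', hil, hjl⟩ :=
      leaves_eq_or_pairwise_ne_of_triangle hp h₁₂ h₂₂ (not_concurrent hpM₂)
  · exact hVeb.image_of_injective (leafPoint_injective i) p _ _ _ _
      ⟨A, hA, rfl⟩ ⟨B, hB, rfl⟩ ⟨C, hC, rfl⟩ ⟨D, hD, rfl⟩
      hL hLM₁₁ hLM₁₂ hLM₂₁ hLM₂₂ hM hpL₁ hpL₂ hpM₁ hpM₂ h₁₁ h₁₂ h₂₁ h₂₂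
  · exact absurd rfl hij'
  · exact absurd hij' hij
  · obtain rfl | hkl := eq_or_ne k l
    · rw [Set.inter_comm] at h₁₁ h₁₂
      exact (leafPoint_image_inter_inter_nonempty hik.symm h₁₁ h₁₂).left
    · exact leafPoint_image_inter_nonempty_of_four_leaves hℒ hA hB hC hD
        hij hik hil hjk hjl hkl hp h₁₁ h₁₂ h₂₁ h₂₂

theorem stmt_3 {S : Type*} (ℒ : Set (Set S)) (hL : IsPLS ℒ) (hVeb : Veblenian ℒ) :
    Veblenian (veroBlocks 2 ℒ) :=
  stmt_3_general ℒ hL.pairwise_subsingleton_inter hVeb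
end

section
/- Let (S, ℒ) be a partial linear space, let k ≥ 2, and let h₀ be a hyperplane of (S, ℒ). Then the set 𝔶_k(h₀) of all size-k multisets with all elements in h₀ is a subspace of V_k(S, ℒ), but it is not l-transversal in V_k(S, ℒ): some block of V_k(S, ℒ) is disjoint from 𝔶_k(h₀). -/
/-- The set `𝔶_k(X)` of the size-`k` multisets with all elements in `X`, as a set of points of the
Veronese space of level `k`. -/
def multisetsOn {S : Type*} (k : ℕ) (X : Set S) : Set (Multiset S) :=
  { m | Multiset.card m = k ∧ ∀ x ∈ m, x ∈ X }

section MultisetsOn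

variable {S : Type*} {X : Set S} {e : Multiset S} {k r : ℕ}

theorem add_replicate_mem_multisetsOn {x : S} (hr : 0 < r) :
    e + Multiset.replicate r x ∈ multisetsOn k X ↔
      Multiset.card e + r = k ∧ (∀ y ∈ e, y ∈ X) ∧ x ∈ X := by
  simp [multisetsOn, Multiset.mem_replicate, or_imp, forall_and, hr.ne']

theorem IsSubspace.isSubspace_multisetsOn {ℒ : Set (Set S)} (hX : IsSubspace ℒ X) (k : ℕ) :
    IsSubspace (veroBlocks k ℒ) (multisetsOn k X) := by
  rintro _ ⟨r, e, B, hr, -, -, hB, rfl⟩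
    ⟨_, ⟨⟨x, hxB, rfl⟩, hx⟩, _, ⟨⟨y, hyB, rfl⟩, hy⟩, hxy⟩
  obtain ⟨hcard, heX, hxX⟩ := (add_replicate_mem_multisetsOn hr).1 hx
  obtain ⟨-, -, hyX⟩ := (add_replicate_mem_multisetsOn hr).1 hy
  have hBX : B ⊆ X := hX B hB ⟨x, ⟨hxB, hxX⟩, y, ⟨hyB, hyX⟩, fun h ↦ hxy (by rw [h])⟩
  rintro _ ⟨z, hzB, rfl⟩
  exact (add_replicate_mem_multisetsOn hr).2 ⟨hcard, heX, hBX hzB⟩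

theorem disjoint_veroBlock_multisetsOn {B : Set S} {a : S} (hae : a ∈ e) (haX : a ∉ X) :
    Disjoint (veroBlock e r B) (multisetsOn k X) := by
  rw [Set.disjoint_left]
  rintro _ ⟨x, -, rfl⟩ ⟨-, hX⟩
  exact haX (hX a (Multiset.mem_add.2 (.inl hae)))

theorem exists_veroBlock_disjoint_multisetsOn {ℒ : Set (Set S)} (hℒ : ℒ.Nonempty)
    (hX : X ≠ Set.univ) (hk : 2 ≤ k) :
    ∃ B ∈ veroBlocks k ℒ, Disjoint B (multisetsOn k X) := by
  obtain ⟨a, haX⟩ := (Set.ne_univ_iff_exists_notMem X).1 hX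
  obtain ⟨B, hB⟩ := hℒ
  have hmem : a ∈ Multiset.replicate (k - 1) a := Multiset.mem_replicate.2 ⟨by omega, rfl⟩
  exact ⟨veroBlock (Multiset.replicate (k - 1) a) 1 B,
    ⟨1, _, B, one_pos, by omega, Multiset.card_replicate _ _, hB, rfl⟩,
    disjoint_veroBlock_multisetsOn hmem haX⟩

end MultisetsOn

theorem stmt_8_general {S : Type*} {ℒ : Set (Set S)} (hℒ : ℒ.Nonempty) {X : Set S}
    (hX : IsSubspace ℒ X) (hX_ne : X ≠ Set.univ) {k : ℕ} (hk : 2 ≤ k) :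
    IsSubspace (veroBlocks k ℒ) (multisetsOn k X) ∧
      ∃ B ∈ veroBlocks k ℒ, B ∩ multisetsOn k X = ∅ := by
  simp only [← Set.disjoint_iff_inter_eq_empty]
  exact ⟨hX.isSubspace_multisetsOn k, exists_veroBlock_disjoint_multisetsOn hℒ hX_ne hk⟩

theorem stmt_8 {S : Type*} (ℒ : Set (Set S)) (hL : IsPLS ℒ)
    (h₀ : Set S) (hh₀ : IsHyperplane ℒ h₀) (k : ℕ) (hk : 2 ≤ k) :
    IsSubspace (veroBlocks k ℒ)
      { m : Multiset S | Multiset.card m = k ∧ ∀ x ∈ m, x ∈ h₀ } ∧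
    ∃ B ∈ veroBlocks k ℒ,
      B ∩ { m : Multiset S | Multiset.card m = k ∧ ∀ x ∈ m, x ∈ h₀ } = ∅ := by
  obtain ⟨hsub, -, hne⟩ := hh₀
  exact stmt_8_general hL.1 hsub hne hk
end

section
/- Let K be a field, V a K-vector space of dimension at least 2, k ≥ 1, and η a nonzero alternating k-linear form on V. Define H_η = { ⟨u₁⟩ + ⟨u₂⟩ + … + ⟨u_k⟩ : u₁, …, u_k ∈ V∖{0}, η(u₁, …, u_k) = 0 } ⊆ 𝔶_k(points of ℙ(V)) (this set is well defined since η is alternating, so the vanishing of η(u₁,…,u_k) depends only on the multiset of projective points ⟨u₁⟩,…,⟨u_k⟩). Then H_η is a hyperplane of the Veronese space V_k(ℙ(V)): a proper subspace meeting every block. -/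
def projLines (K V : Type*) [Field K] [AddCommGroup V] [Module K V] :
    Set (Set (Projectivization K V)) :=
  { L | ∃ W : Submodule K V, Module.finrank K ↥W = 2 ∧
      L = { p : Projectivization K V | p.submodule ≤ W } }

def Hxi {K V : Type*} [Field K] [AddCommGroup V] [Module K V]
    (ξ : V →ₗ[K] V →ₗ[K] K) : Set (Multiset (Projectivization K V)) :=
  { m | ∃ (u v : V) (hu : u ≠ 0) (hv : v ≠ 0), ξ u v = 0 ∧
      m = ({Projectivization.mk K u hu, Projectivization.mk K v hv} :
        Multiset (Projectivization K V)) }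

/-!
Fix a multiset `e` of `k - r` points with `r > 0`, and ask for which points `x` the multiset
`e + r • x` lies in `H_η`. If `r ≥ 2` all of them do, because `η` vanishes on families with a
repetition. If `r = 1` they are the points of the kernel of the linear form `η(·, e)`. Either way
they are the points of the kernel of a linear form, hence a subspace of `ℙ(V)` that meets every
line, and both properties pass from these traces to the blocks of the Veronese space.
-/

open Module
open scoped LinearAlgebra.Projectivization

theorem exists_perm_of_map_univ_eq {ι α : Type*} [Fintype ι] {f g : ι → α}
    (h : Finset.univ.val.map f = Finset.univ.val.map g) :
    ∃ σ : Equiv.Perm ι, g ∘ σ = f := by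
  classical
  have card_fiber (a : α) : Fintype.card {i // f i = a} = Fintype.card {i // g i = a} := by
    simpa only [Multiset.count_map, Fintype.card_subtype, Finset.card_def, Finset.filter_val,
      eq_comm] using congrArg (Multiset.count a) h
  let fiberEquiv (a : α) : {i // f i = a} ≃ {i // g i = a} := Fintype.equivOfCardEq (card_fiber a)
  exact ⟨Equiv.ofFiberEquiv fiberEquiv, funext (Equiv.ofFiberEquiv_map fiberEquiv)⟩

section Trace

variable {S : Type*} {k r : ℕ} {L : Set (Set S)} {X : Set (Multiset S)} {e : Multiset S} {B : Set S}

/-- The trace of `X` on the leaf through `e` of multiplicity `r`, read as a set of points of `S`: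
it turns statements about blocks of the Veronese space into statements about lines of `S`. -/
def veroTrace (X : Set (Multiset S)) (e : Multiset S) (r : ℕ) : Set S :=
  {x | e + Multiset.replicate r x ∈ X}

theorem veroBlock_subset_iff : veroBlock e r B ⊆ X ↔ B ⊆ veroTrace X e r :=
  ⟨fun h x hx ↦ h ⟨x, hx, rfl⟩, by rintro h _ ⟨x, hx, rfl⟩; exact h hx⟩

theorem veroBlock_inter_nonempty_iff :
    (veroBlock e r B ∩ X).Nonempty ↔ (B ∩ veroTrace X e r).Nonempty :=
  ⟨by rintro ⟨_, ⟨x, hx, rfl⟩, hX⟩; exact ⟨x, hx, hX⟩, fun ⟨x, hx, hX⟩ ↦ ⟨_, ⟨x, hx, rfl⟩, hX⟩⟩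

theorem isSubspace_veroBlocks_of_veroTrace
    (h : ∀ (e : Multiset S) (r : ℕ), 0 < r → e.card + r = k → IsSubspace L (veroTrace X e r)) :
    IsSubspace (veroBlocks k L) X := by
  rintro _ ⟨r, e, B, hr, hrk, he, hB, rfl⟩ ⟨_, ⟨⟨x, hx, rfl⟩, hxX⟩, _, ⟨⟨y, hy, rfl⟩, hyX⟩, hxy⟩
  have hne : x ≠ y := by rintro rfl; exact hxy rfl
  exact veroBlock_subset_iff.2 (h e r hr (by lia) B hB ⟨x, ⟨hx, hxX⟩, y, ⟨hy, hyX⟩, hne⟩)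

theorem veroBlocks_inter_nonempty_of_veroTrace
    (h : ∀ (e : Multiset S) (r : ℕ), 0 < r → e.card + r = k →
      ∀ B ∈ L, (B ∩ veroTrace X e r).Nonempty) :
    ∀ B ∈ veroBlocks k L, (B ∩ X).Nonempty := by
  rintro _ ⟨r, e, B, hr, hrk, he, hB, rfl⟩
  exact veroBlock_inter_nonempty_iff.2 (h e r hr (by lia) B hB)

end Trace

section Lines

theorem mem_projectivization_iff_rep_mem {K V : Type*} [DivisionRing K] [AddCommGroup V]
    [Module K V] {W : Submodule K V} {x : ℙ K V} : x ∈ W.projectivization ↔ x.rep ∈ W := by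
  rw [← W.mk_mem_projectivization_iff x.rep_nonzero, x.mk_rep]

variable {K V : Type*} [Field K] [AddCommGroup V] [Module K V]

theorem mem_projLines_iff {B : Set (ℙ K V)} :
    B ∈ projLines K V ↔ ∃ W : Submodule K V, finrank K W = 2 ∧ B = W.projectivization := by
  have points_eq (W : Submodule K V) :
      {x : ℙ K V | x.submodule ≤ W} = (W.projectivization : Set (ℙ K V)) :=
    Set.ext fun x ↦ (W.mem_projectivization_iff_submodule_le x).symm
  simp only [projLines, points_eq, Set.mem_ofPred_eq]

theorem isSubspace_projLines_projectivization (U : Submodule K V) :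
    IsSubspace (projLines K V) U.projectivization := by
  rintro _ hB ⟨x, ⟨hxW, hxU⟩, y, ⟨hyW, hyU⟩, hxy⟩
  obtain ⟨W, hW, rfl⟩ := mem_projLines_iff.1 hB
  have hWeq : W = Submodule.span K {x.rep, y.rep} :=
    Projectivization.line_unique' x.rep_nonzero y.rep_nonzero
      (Projectivization.linearIndependent_pair_iff_ne.2 hxy) W hW
      (by rwa [x.mk_rep]) (by rwa [y.mk_rep])
  have hWU : W ≤ U := by
    rw [hWeq, Submodule.span_le, Set.pair_subset_iff]
    exact ⟨mem_projectivization_iff_rep_mem.1 hxU, mem_projectivization_iff_rep_mem.1 hyU⟩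
  exact Submodule.projectivization.monotone hWU

theorem inter_projectivization_ker_nonempty {N : Type*} [AddCommGroup N] [Module K N]
    [Module.Finite K N] (hN : finrank K N ≤ 1) (f : V →ₗ[K] N) {B : Set (ℙ K V)}
    (hB : B ∈ projLines K V) : (B ∩ (LinearMap.ker f).projectivization).Nonempty := by
  obtain ⟨W, hW, rfl⟩ := mem_projLines_iff.1 hB
  have : Module.Finite K W := Module.finite_of_finrank_eq_succ hW
  have hker : LinearMap.ker (f.domRestrict W) ≠ ⊥ := LinearMap.ker_ne_bot_of_finrank_lt (by lia)
  obtain ⟨w, hfw, hw⟩ := Submodule.exists_mem_ne_zero_of_ne_bot hker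
  exact ⟨.mk K w (by simpa using hw), w.2, hfw⟩

end Lines

section ZeroLocus

variable {K V N : Type*} [Field K] [AddCommGroup V] [Module K V] [AddCommGroup N] [Module K N]
  {k r : ℕ} {e : Multiset (ℙ K V)} (η : V [⋀^Fin k]→ₗ[K] N)

/-- The paper's `H_η`, for an alternating map `η` with values in an arbitrary vector space: the
multisets of projective points on whose representatives `η` vanishes. -/
def veroZeroLocus : Set (Multiset (ℙ K V)) :=
  {m | ∃ (u : Fin k → V) (hu : ∀ i, u i ≠ 0), η u = 0 ∧
    m = (List.ofFn fun i ↦ Projectivization.mk K (u i) (hu i) : Multiset (ℙ K V))}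

theorem veroZeroLocus_subset_veroPoints : veroZeroLocus η ⊆ veroPoints (ℙ K V) k := by
  rintro _ ⟨u, hu, -, rfl⟩
  simp [veroPoints]

variable {η}

theorem map_eq_zero_of_mk_comp_perm_eq {ι : Type*} [Finite ι] {η : V [⋀^ι]→ₗ[K] N}
    {u w : ι → V} {hu : ∀ i, u i ≠ 0} {hw : ∀ i, w i ≠ 0} {σ : Equiv.Perm ι}
    (h : ∀ i, Projectivization.mk K (w (σ i)) (hw (σ i)) = Projectivization.mk K (u i) (hu i))
    (hηw : η w = 0) : η u = 0 := by
  classical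
  have := Fintype.ofFinite ι
  choose a ha using fun i ↦ (Projectivization.mk_eq_mk_iff' K _ _ _ _).1 (h i).symm
  calc η u = η (fun i ↦ a i • (w ∘ σ) i) := congrArg η (funext fun i ↦ (ha i).symm)
    _ = (∏ i, a i) • Equiv.Perm.sign σ • η w := by rw [η.map_smul_univ, η.map_perm]
    _ = 0 := by rw [hηw, smul_zero, smul_zero]

theorem ofFn_mk_mem_veroZeroLocus_iff {u : Fin k → V} (hu : ∀ i, u i ≠ 0) :
    (List.ofFn fun i ↦ Projectivization.mk K (u i) (hu i) : Multiset (ℙ K V)) ∈ veroZeroLocus η ↔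
      η u = 0 := by
  refine ⟨?_, fun h ↦ ⟨u, hu, h, rfl⟩⟩
  rintro ⟨w, hw, hηw, h⟩
  rw [← Fin.univ_val_map, ← Fin.univ_val_map] at h
  obtain ⟨σ, hσ⟩ := exists_perm_of_map_univ_eq h
  exact map_eq_zero_of_mk_comp_perm_eq (congrFun hσ) hηw

theorem ofFn_mem_veroZeroLocus_iff {p : Fin k → ℙ K V} :
    (List.ofFn p : Multiset (ℙ K V)) ∈ veroZeroLocus η ↔ η (fun i ↦ (p i).rep) = 0 := by
  simpa only [Projectivization.mk_rep] using
    ofFn_mk_mem_veroZeroLocus_iff (η := η) fun i ↦ (p i).rep_nonzero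

theorem veroZeroLocus_ne_veroPoints (hη : η ≠ 0) : veroZeroLocus η ≠ veroPoints (ℙ K V) k := by
  intro h
  obtain ⟨u, hηu⟩ := DFunLike.ne_iff.1 hη
  have hu (i : Fin k) : u i ≠ 0 := fun hi ↦ hηu (η.map_coord_zero i hi)
  refine hηu ((ofFn_mk_mem_veroZeroLocus_iff hu).1 ?_)
  rw [h]
  simp [veroPoints]

theorem mem_veroZeroLocus_of_not_nodup {m : Multiset (ℙ K V)} (hm : m.card = k)
    (hdup : ¬ m.Nodup) : m ∈ veroZeroLocus η := by
  induction m using Quotient.inductionOn with | _ l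
  induction l using List.ofFnRec with | _ n p
  obtain rfl : n = k := by simpa using hm
  refine ofFn_mem_veroZeroLocus_iff.2 <|
    η.map_eq_zero_of_not_injective (Projectivization.rep ∘ p) fun hinj ↦ hdup ?_
  exact Multiset.coe_nodup.2 (List.nodup_ofFn.2 hinj.of_comp)

theorem exists_cons_mem_veroZeroLocus_iff (η : V [⋀^Fin k]→ₗ[K] N) (he : e.card + 1 = k) :
    ∃ f : V →ₗ[K] N, ∀ x : ℙ K V, x ::ₘ e ∈ veroZeroLocus η ↔ f x.rep = 0 := by
  induction e using Quotient.inductionOn with | _ l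
  induction l using List.ofFnRec with | _ n p
  obtain rfl : n + 1 = k := by simpa using he
  let w : Fin n → V := fun i ↦ (p i).rep
  refine ⟨η.toMultilinearMap.toLinearMap (Fin.cons 0 w) 0, fun x ↦ ?_⟩
  have ofFn_cons : (x ::ₘ ⟦List.ofFn p⟧ : Multiset (ℙ K V)) =
      List.ofFn (Fin.cons x p : Fin (n + 1) → ℙ K V) := by
    simp [List.ofFn_succ]
  have rep_cons : (fun i ↦ ((Fin.cons x p : Fin (n + 1) → ℙ K V) i).rep) = Fin.cons x.rep w :=
    Fin.comp_cons Projectivization.rep x p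
  rw [ofFn_cons, ofFn_mem_veroZeroLocus_iff, rep_cons]
  simp

theorem exists_veroTrace_veroZeroLocus_eq (η : V [⋀^Fin k]→ₗ[K] N) (hr : 0 < r)
    (he : e.card + r = k) :
    ∃ f : V →ₗ[K] N, veroTrace (veroZeroLocus η) e r = (LinearMap.ker f).projectivization := by
  suffices ∃ f : V →ₗ[K] N, ∀ x : ℙ K V,
      e + Multiset.replicate r x ∈ veroZeroLocus η ↔ f x.rep = 0 by
    obtain ⟨f, hf⟩ := this
    exact ⟨f, Set.ext fun x ↦ (hf x).trans <|
      (mem_projectivization_iff_rep_mem (W := LinearMap.ker f)).symm⟩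
  obtain rfl | hr2 : r = 1 ∨ 2 ≤ r := by lia
  · obtain ⟨f, hf⟩ := exists_cons_mem_veroZeroLocus_iff η he
    exact ⟨f, fun x ↦ by rw [Multiset.replicate_one, add_comm, Multiset.singleton_add, hf]⟩
  · refine ⟨0, fun x ↦ iff_of_true (mem_veroZeroLocus_of_not_nodup (by simpa using he) ?_) rfl⟩
    intro hnodup
    have hle : Multiset.replicate 2 x ≤ e + Multiset.replicate r x :=
      (Multiset.replicate_mono x hr2).trans (Multiset.le_add_left _ _)
    exact Multiset.nodup_iff_le.1 hnodup x hle

end ZeroLocus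

theorem stmt_15 {K V : Type*} [Field K] [AddCommGroup V] [Module K V]
    (hdim : 2 ≤ Module.rank K V) (k : ℕ) (hk : 1 ≤ k)
    (η : AlternatingMap K V K (Fin k)) (hη : η ≠ 0) :
    IsVeroHyperplane k (projLines K V)
      { m : Multiset (Projectivization K V) |
        ∃ (u : Fin k → V) (hu : ∀ i, u i ≠ 0), η u = 0 ∧
          m = ((List.ofFn fun i => Projectivization.mk K (u i) (hu i)) :
            Multiset (Projectivization K V)) } := by
  change IsVeroHyperplane k (projLines K V) (veroZeroLocus η)
  refine ⟨veroZeroLocus_subset_veroPoints η, veroZeroLocus_ne_veroPoints hη,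
    isSubspace_veroBlocks_of_veroTrace fun e r hr he ↦ ?_,
    veroBlocks_inter_nonempty_of_veroTrace fun e r hr he B hB ↦ ?_⟩
  all_goals obtain ⟨f, hf⟩ := exists_veroTrace_veroZeroLocus_eq η hr he
  · exact hf ▸ isSubspace_projLines_projectivization (LinearMap.ker f)
  · exact hf ▸ inter_projectivization_ker_nonempty (finrank_self K).le f hB
end

section
/- Let K be a field with char K ≠ 2 and V a K-vector space with dim_K V ≥ 4. Let ω be a nonzero alternating bilinear form on V and let Q(ω) be the associated symplectic polar space: its points are all points of ℙ(V) and its lines are the projective lines L such that ω(u,v) = 0 for all u, v in the 2-dimensional subspace corresponding to L (totally ω-isotropic lines). Let ξ be a nonzero alternating bilinear form on V and H_ξ = { ⟨u⟩ + ⟨v⟩ : u, v ∈ V∖{0}, ξ(u,v) = 0 }. Then H_ξ is a hyperplane of the Veronese space V₂(Q(ω)): a proper subspace of V₂(Q(ω)) meeting every block of V₂(Q(ω)). -/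
def polarLines (K V : Type*) [Field K] [AddCommGroup V] [Module K V]
    (ω : V →ₗ[K] V →ₗ[K] K) : Set (Set (Projectivization K V)) :=
  { L | ∃ W : Submodule K V, Module.finrank K ↥W = 2 ∧
      (∀ u ∈ W, ∀ v ∈ W, ω u v = 0) ∧
      L = { p : Projectivization K V | p.submodule ≤ W } }

/-!
The blocks of `V₂(S, L)` are the translates `a + B` and the doubled lines `2B` for `B ∈ L`. Since
`ξ` is alternating, `H_ξ` contains every `2p`, so doubled lines lie in it. For `a = ⟨u⟩`, the points
`q` with `a + q ∈ H_ξ` are those of `ℙ(ker ξ(u, ·))`, and a subspace of `V` of codimension at most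
one meets every projective line, in one point or in the whole line.
-/

section Veronese

variable {S : Type*} {L : Set (Set S)} {X : Set (Multiset S)}

theorem IsSubspace.anti {L' : Set (Set S)} {Y : Set S} (hY : IsSubspace L' Y) (hL : L ⊆ L') :
    IsSubspace L Y :=
  fun B hB ↦ hY B (hL hB)

theorem pair_mem_veroPoints (p q : S) : ({p, q} : Multiset S) ∈ veroPoints S 2 :=
  Multiset.card_pair p q

theorem multiset_pair_eq_pair_iff_s17 {p q p' q' : S} :
    ({p, q} : Multiset S) = {p', q'} ↔ p = p' ∧ q = q' ∨ p = q' ∧ q = p' :=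
  Multiset.coe_eq_coe.trans <| List.perm_pair.trans <| by simp

theorem dbl_eq_veroBlock (B : Set S) : dbl B = veroBlock 0 2 B := by
  simp only [dbl, veroBlock, zero_add]
  rfl

theorem mem_veroBlocks_two_iff {T : Set (Multiset S)} :
    T ∈ veroBlocks 2 L ↔ ∃ B ∈ L, T = dbl B ∨ ∃ a, T = addPt a B := by
  constructor
  · rintro ⟨r, e, B, hr_pos, hr_le, he, hB, rfl⟩
    refine ⟨B, hB, ?_⟩
    obtain rfl | rfl : r = 1 ∨ r = 2 := by omega
    · obtain ⟨a, rfl⟩ := Multiset.card_eq_one.1 he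
      exact .inr ⟨a, rfl⟩
    · obtain rfl := Multiset.card_eq_zero.1 he
      exact .inl (dbl_eq_veroBlock B).symm
  · rintro ⟨B, hB, rfl | ⟨a, rfl⟩⟩
    · exact ⟨2, 0, B, by simp, le_rfl, rfl, hB, dbl_eq_veroBlock B⟩
    · exact ⟨1, {a}, B, by simp, by simp, rfl, hB, rfl⟩

theorem isSubspace_veroBlocks_two (hdiag : ∀ p, {p, p} ∈ X)
    (hX : ∀ a, IsSubspace L {q | {a, q} ∈ X}) : IsSubspace (veroBlocks 2 L) X := by
  rintro T hT ⟨t, ⟨htT, htX⟩, t', ⟨htT', htX'⟩, hne⟩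
  obtain ⟨B, hB, rfl | ⟨a, rfl⟩⟩ := mem_veroBlocks_two_iff.1 hT
  · rintro _ ⟨p, -, rfl⟩
    exact hdiag p
  · obtain ⟨p, hp, rfl⟩ := htT
    obtain ⟨q, hq, rfl⟩ := htT'
    have hpq : p ≠ q := by rintro rfl; exact hne rfl
    rintro _ ⟨s, hs, rfl⟩
    exact hX a B hB ⟨p, ⟨hp, htX⟩, q, ⟨hq, htX'⟩, hpq⟩ hs

theorem inter_nonempty_of_mem_veroBlocks_two (hL : ∀ B ∈ L, B.Nonempty)
    (hdiag : ∀ p, {p, p} ∈ X) (hX : ∀ a, ∀ B ∈ L, (B ∩ {q | {a, q} ∈ X}).Nonempty) :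
    ∀ T ∈ veroBlocks 2 L, (T ∩ X).Nonempty := by
  intro T hT
  obtain ⟨B, hB, rfl | ⟨a, rfl⟩⟩ := mem_veroBlocks_two_iff.1 hT
  · obtain ⟨p, hp⟩ := hL B hB
    exact ⟨{p, p}, ⟨p, hp, rfl⟩, hdiag p⟩
  · obtain ⟨q, hqB, hqX⟩ := hX a B hB
    exact ⟨{a, q}, ⟨q, hqB, rfl⟩, hqX⟩

end Veronese

section Projective

variable {K V : Type*} [Field K] [AddCommGroup V] [Module K V]

theorem submodule_mk_le_iff {u : V} (hu : u ≠ 0) {U : Submodule K V} :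
    (Projectivization.mk K u hu).submodule ≤ U ↔ u ∈ U := by
  rw [Projectivization.submodule_mk, Submodule.span_singleton_le_iff_mem]

theorem submodule_sup_submodule_eq_of_finrank_eq_two {p q : Projectivization K V} (hpq : p ≠ q)
    {W : Submodule K V} (hW : Module.finrank K W = 2) (hp : p.submodule ≤ W)
    (hq : q.submodule ≤ W) : p.submodule ⊔ q.submodule = W := by
  have : FiniteDimensional K W := Module.finite_of_finrank_eq_succ hW
  have hdisj : Disjoint p.submodule q.submodule :=
    (Submodule.isAtom_iff_finrank_eq_one.2 p.finrank_submodule).disjoint_of_ne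
      (Submodule.isAtom_iff_finrank_eq_one.2 q.finrank_submodule)
      (Projectivization.submodule_injective.ne hpq)
  refine Submodule.eq_of_le_of_finrank_eq (sup_le hp hq) ?_
  have hdim := Submodule.finrank_sup_add_finrank_inf_eq p.submodule q.submodule
  rw [hdisj.eq_bot, finrank_bot, p.finrank_submodule, q.finrank_submodule] at hdim
  exact hdim.trans hW.symm

theorem isSubspace_projLines (U : Submodule K V) :
    IsSubspace (projLines K V) {p | p.submodule ≤ U} := by
  rintro _ ⟨W, hW, rfl⟩ ⟨p, ⟨hpW, hpU⟩, q, ⟨hqW, hqU⟩, hpq⟩ s hs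
  have hWU : W ≤ U :=
    submodule_sup_submodule_eq_of_finrank_eq_two hpq hW hpW hqW ▸ sup_le hpU hqU
  exact le_trans hs hWU

theorem projLine_inter_ker_nonempty (f : V →ₗ[K] K) {B : Set (Projectivization K V)}
    (hB : B ∈ projLines K V) : (B ∩ {p | p.submodule ≤ LinearMap.ker f}).Nonempty := by
  obtain ⟨W, hW, rfl⟩ := hB
  have : FiniteDimensional K W := Module.finite_of_finrank_eq_succ hW
  have hker : LinearMap.ker (f.domRestrict W) ≠ ⊥ :=
    LinearMap.ker_ne_bot_of_finrank_lt (by simp [hW])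
  obtain ⟨w, hfw, hw⟩ := Submodule.exists_mem_ne_zero_of_ne_bot hker
  have hw' : (w : V) ≠ 0 := by simpa using hw
  exact ⟨Projectivization.mk K (w : V) hw', (submodule_mk_le_iff hw').2 w.2,
    (submodule_mk_le_iff hw').2 hfw⟩

theorem polarLines_subset_projLines (ω : V →ₗ[K] V →ₗ[K] K) :
    polarLines K V ω ⊆ projLines K V := by
  rintro _ ⟨W, hW, -, rfl⟩
  exact ⟨W, hW, rfl⟩

end Projective

section Hxi

variable {K V : Type*} [Field K] [AddCommGroup V] [Module K V] {ξ : V →ₗ[K] V →ₗ[K] K}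

theorem Hxi_subset_veroPoints : Hxi ξ ⊆ veroPoints (Projectivization K V) 2 := by
  rintro _ ⟨u, v, hu, hv, -, rfl⟩
  exact pair_mem_veroPoints _ _

theorem apply_eq_zero_of_mk_eq_mk {u v u' v' : V} {hu : u ≠ 0} {hv : v ≠ 0} {hu' : u' ≠ 0}
    {hv' : v' ≠ 0} (huu' : Projectivization.mk K u hu = .mk K u' hu')
    (hvv' : Projectivization.mk K v hv = .mk K v' hv') (h : ξ u' v' = 0) : ξ u v = 0 := by
  obtain ⟨a, rfl⟩ := (Projectivization.mk_eq_mk_iff' K u u' hu hu').1 huu'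
  obtain ⟨b, rfl⟩ := (Projectivization.mk_eq_mk_iff' K v v' hv hv').1 hvv'
  simp [h]

theorem pair_mk_mem_Hxi_iff (hξ : ξ.IsRefl) {u v : V} (hu : u ≠ 0) (hv : v ≠ 0) :
    {Projectivization.mk K u hu, Projectivization.mk K v hv} ∈ Hxi ξ ↔ ξ u v = 0 := by
  refine ⟨?_, fun h ↦ ⟨u, v, hu, hv, h, rfl⟩⟩
  rintro ⟨u', v', hu', hv', h, heq⟩
  obtain ⟨huu', hvv'⟩ | ⟨huv', hvu'⟩ := multiset_pair_eq_pair_iff_s17.1 heq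
  · exact apply_eq_zero_of_mk_eq_mk huu' hvv' h
  · exact apply_eq_zero_of_mk_eq_mk huv' hvu' (hξ u' v' h)

theorem setOf_pair_mem_Hxi (hξ : ξ.IsRefl) (p : Projectivization K V) :
    {q | {p, q} ∈ Hxi ξ} = {q | q.submodule ≤ LinearMap.ker (ξ p.rep)} := by
  ext q
  induction q using Projectivization.ind with
  | h v hv =>
    rw [Set.mem_ofPred_eq, Set.mem_ofPred_eq, submodule_mk_le_iff, LinearMap.mem_ker,
      ← pair_mk_mem_Hxi_iff hξ p.rep_nonzero hv, p.mk_rep]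

theorem Hxi_ne_veroPoints (hrefl : ξ.IsRefl) (hξ : ξ ≠ 0) :
    Hxi ξ ≠ veroPoints (Projectivization K V) 2 := by
  intro heq
  obtain ⟨u, v, huv⟩ : ∃ u v, ξ u v ≠ 0 := by
    contrapose! hξ
    exact LinearMap.ext₂ hξ
  have hu : u ≠ 0 := by rintro rfl; simp at huv
  have hv : v ≠ 0 := by rintro rfl; simp at huv
  exact huv ((pair_mk_mem_Hxi_iff hrefl hu hv).1 (heq ▸ pair_mem_veroPoints _ _))

theorem pair_self_mem_Hxi (hξ : ξ.IsAlt) (p : Projectivization K V) : {p, p} ∈ Hxi ξ := by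
  induction p using Projectivization.ind with
  | h u hu => exact ⟨u, u, hu, hu, hξ u, rfl⟩

end Hxi

theorem stmt_17_general {K V : Type*} [Field K] [AddCommGroup V] [Module K V]
    {L : Set (Set (Projectivization K V))} (hL : L ⊆ projLines K V)
    {ξ : V →ₗ[K] V →ₗ[K] K} (hξ : ξ ≠ 0) (halt : ξ.IsAlt) : IsVeroHyperplane 2 L (Hxi ξ) := by
  have hdiag := pair_self_mem_Hxi halt
  have hnonempty : ∀ B ∈ L, B.Nonempty := fun B hB ↦
    (projLine_inter_ker_nonempty 0 (hL hB)).left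
  have hsubspace (p) : IsSubspace L {q | {p, q} ∈ Hxi ξ} := by
    rw [setOf_pair_mem_Hxi halt.isRefl]
    exact (isSubspace_projLines _).anti hL
  have htransversal (p) (B) (hB : B ∈ L) : (B ∩ {q | {p, q} ∈ Hxi ξ}).Nonempty := by
    rw [setOf_pair_mem_Hxi halt.isRefl]
    exact projLine_inter_ker_nonempty _ (hL hB)
  exact ⟨Hxi_subset_veroPoints, Hxi_ne_veroPoints halt.isRefl hξ,
    isSubspace_veroBlocks_two hdiag hsubspace,
    inter_nonempty_of_mem_veroBlocks_two hnonempty hdiag htransversal⟩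

theorem stmt_17 {K V : Type*} [Field K] [AddCommGroup V] [Module K V]
    (hchar : (2 : K) ≠ 0) (hdim : 4 ≤ Module.rank K V)
    (ω : V →ₗ[K] V →ₗ[K] K) (hω : ω ≠ 0) (haltω : ∀ u : V, ω u u = 0)
    (ξ : V →ₗ[K] V →ₗ[K] K) (hξ : ξ ≠ 0) (haltξ : ∀ u : V, ξ u u = 0) :
    IsVeroHyperplane 2 (polarLines K V ω) (Hxi ξ) :=
  stmt_17_general (polarLines_subset_projLines ω) hξ haltξ
end

section
/- Let A₀ = (S, ℒ₀, ∥₀) be an affine partial linear space and let k > 1. Define a relation ∥ on the blocks of V_k(S, ℒ₀) by: B₁ ∥ B₂ iff there are e₁, e₂, r₁, r₂ and lines L₁, L₂ ∈ ℒ₀ with L₁ ∥₀ L₂ such that B_i = {e_i + r_i·x : x ∈ L_i} for i = 1, 2. Then: (1) ∥ is an equivalence relation on the blocks of V_k(S, ℒ₀) and each of its equivalence classes covers the point set 𝔶_k(S); (2) for every block L and every point f ∈ 𝔶_k(S), each of the k leaves of V_k(S, ℒ₀) passing through f contains exactly one block through f that is ∥-parallel to L; (3) consequently ∥ is not a partial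 parallelism: there exist distinct blocks B₁ ∥ B₂ with B₁ ∩ B₂ ≠ ∅. -/
def VPar {S : Type*} (k : ℕ) (ℒ : Set (Set S)) (par : Set S → Set S → Prop)
    (B₁ B₂ : Set (Multiset S)) : Prop :=
  ∃ (r₁ r₂ : ℕ) (e₁ e₂ : Multiset S) (L₁ L₂ : Set S),
    0 < r₁ ∧ r₁ ≤ k ∧ Multiset.card e₁ = k - r₁ ∧
    0 < r₂ ∧ r₂ ≤ k ∧ Multiset.card e₂ = k - r₂ ∧
    L₁ ∈ ℒ ∧ L₂ ∈ ℒ ∧ par L₁ L₂ ∧ B₁ = veroBlock e₁ r₁ L₁ ∧ B₂ = veroBlock e₂ r₂ L₂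

/-!
The direction `L` of a block `{e + r·x : x ∈ L}` is determined by the block: two distinct points
`e + r·a ≠ e + r·b` of it already determine `e` and `r`, by comparing multiplicities of `a`.
Hence `∥` is the pullback of `∥₀` along the direction map, and so an equivalence relation.
A block contained in the leaf `{e + r·x : x ∈ S}` has the form `{e + r·x : x ∈ L}`, so blocks
through `e + r·y` in that leaf correspond to lines through `y`, and exactly one line through `y` is
`∥₀`-parallel to a given one. A point `k·p` with `k > 1` lies on two different leaves, and therefore
on two distinct parallel blocks.
-/

section Blocks

open Multiset (replicate)

variable {S : Type*} {e e' f : Multiset S} {r r' k : ℕ} {a b x y : S} {L L' : Set S}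
  {B T : Set (Multiset S)}

theorem AtLeastThree.nontrivial (h : AtLeastThree L) : L.Nontrivial :=
  let ⟨a, b, _, ha, hb, _, hab, _, _⟩ := h
  ⟨a, ha, b, hb, hab⟩

theorem eq_and_eq_and_eq_of_add_replicate_eq (hr : r ≠ 0) (hab : a ≠ b)
    (hax : e + replicate r a = e' + replicate r' x)
    (hby : e + replicate r b = e' + replicate r' y) : e = e' ∧ r = r' ∧ a = x := by
  classical
  have count_ax : e.count a + r = e'.count a + if x = a then r' else 0 := by
    simpa [Multiset.count_replicate] using congrArg (Multiset.count a) hax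
  have count_by : e.count a = e'.count a + if y = a then r' else 0 := by
    simpa [Multiset.count_replicate, hab.symm] using congrArg (Multiset.count a) hby
  have hx : x = a := by
    by_contra hxa
    rw [if_neg hxa] at count_ax
    omega
  have hrr' : r = r' := by
    rw [if_pos hx] at count_ax
    split_ifs at count_by <;> omega
  subst hx hrr'
  exact ⟨add_right_cancel hax, rfl, rfl⟩

theorem veroBlock_mono_s18 (h : L ⊆ L') : veroBlock e r L ⊆ veroBlock e r L' :=
  fun _ ⟨x, hx, hm⟩ => ⟨x, h hx, hm⟩

theorem add_replicate_mem_veroBlock_iff (hr : r ≠ 0) :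
    e + replicate r y ∈ veroBlock e r L ↔ y ∈ L := by
  refine ⟨fun ⟨x, hx, hyx⟩ => ?_, fun hy => ⟨y, hy, rfl⟩⟩
  rwa [Multiset.replicate_right_injective hr (add_left_cancel hyx)]

theorem veroBlock_subset_veroBlock_iff (hr : r ≠ 0) (hL : L.Nontrivial) :
    veroBlock e r L ⊆ veroBlock e' r' L' ↔ e = e' ∧ r = r' ∧ L ⊆ L' := by
  refine ⟨fun h => ?_, fun ⟨he, hr', hLL'⟩ => he ▸ hr' ▸ veroBlock_mono_s18 hLL'⟩
  have params_eq : ∀ a ∈ L, e = e' ∧ r = r' ∧ a ∈ L' := fun a ha => by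
    obtain ⟨b, hb, hba⟩ := hL.exists_ne a
    obtain ⟨x, hx, hax⟩ := h ⟨a, ha, rfl⟩
    obtain ⟨y, -, hby⟩ := h ⟨b, hb, rfl⟩
    obtain ⟨he, hr', rfl⟩ := eq_and_eq_and_eq_of_add_replicate_eq hr hba.symm hax hby
    exact ⟨he, hr', hx⟩
  obtain ⟨a, ha⟩ := hL.nonempty
  exact ⟨(params_eq a ha).1, (params_eq a ha).2.1, fun c hc => (params_eq c hc).2.2⟩

theorem veroBlock_eq_veroBlock_iff (hr : r ≠ 0) (hL : L.Nontrivial) :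
    veroBlock e r L = veroBlock e' r' L' ↔ e = e' ∧ r = r' ∧ L = L' := by
  refine ⟨fun h => ?_, fun ⟨he, hr', hLL'⟩ => by rw [he, hr', hLL']⟩
  obtain ⟨rfl, rfl, hLL'⟩ := (veroBlock_subset_veroBlock_iff hr hL).1 h.subset
  have hL'L := ((veroBlock_subset_veroBlock_iff hr (hL.mono hLL')).1 h.superset).2.2
  exact ⟨rfl, rfl, hLL'.antisymm hL'L⟩

/-- `B` is a block `{e + r·x : x ∈ L}` of the `k`-th Veronese space, and `L` is its direction.
The size condition `|e| = k - r`, `r ≤ k` is written without subtraction. -/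
def HasDirection (k : ℕ) (B : Set (Multiset S)) (L : Set S) : Prop :=
  ∃ (e : Multiset S) (r : ℕ), r ≠ 0 ∧ Multiset.card e + r = k ∧ B = veroBlock e r L

theorem hasDirection_iff : HasDirection k B L ↔ ∃ (r : ℕ) (e : Multiset S),
    0 < r ∧ r ≤ k ∧ Multiset.card e = k - r ∧ B = veroBlock e r L := by
  constructor
  · rintro ⟨e, r, hr, hcard, rfl⟩
    exact ⟨r, e, by omega, by omega, by omega, rfl⟩
  · rintro ⟨r, e, hr, hrk, hcard, rfl⟩
    exact ⟨e, r, by omega, by omega, rfl⟩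

theorem HasDirection.unique (h : HasDirection k B L) (h' : HasDirection k B L')
    (hL : L.Nontrivial) : L = L' := by
  obtain ⟨e, r, hr, -, rfl⟩ := h
  obtain ⟨e', r', -, -, heq⟩ := h'
  exact ((veroBlock_eq_veroBlock_iff hr hL).1 heq).2.2

theorem HasDirection.eq_veroBlock_of_subset (h : HasDirection k B L) (hL : L.Nontrivial)
    (hB : B ⊆ veroBlock e r L') : B = veroBlock e r L := by
  obtain ⟨e', r', hr', -, rfl⟩ := h
  obtain ⟨rfl, rfl, -⟩ := (veroBlock_subset_veroBlock_iff hr' hL).1 hB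
  rfl

theorem mem_veroLeaves_iff : T ∈ veroLeaves S k ↔ HasDirection k T Set.univ :=
  hasDirection_iff.symm

theorem exists_mem_veroLeaves_mem (hk : k ≠ 0) (hf : f ∈ veroPoints S k) :
    ∃ T ∈ veroLeaves S k, f ∈ T := by
  obtain rfl : Multiset.card f = k := hf
  obtain ⟨a, t, rfl⟩ : ∃ a t, f = a ::ₘ t := by
    obtain ⟨a, ha⟩ := Multiset.card_pos_iff_exists_mem.1 (Nat.pos_of_ne_zero hk)
    exact ⟨a, Multiset.exists_cons_of_mem ha⟩
  refine ⟨veroBlock t 1 Set.univ, mem_veroLeaves_iff.2 ⟨t, 1, one_ne_zero, ?_, rfl⟩,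
    a, Set.mem_univ a, ?_⟩
  · rw [Multiset.card_cons]
  · rw [Multiset.replicate_one, add_comm, Multiset.singleton_add]

theorem exists_ne_hasDirection_inter_nonempty (hk : 1 < k) (hL : L.Nontrivial) :
    ∃ B₁ B₂, B₁ ≠ B₂ ∧ HasDirection k B₁ L ∧ HasDirection k B₂ L ∧ (B₁ ∩ B₂).Nonempty := by
  obtain ⟨p, hp⟩ := hL.nonempty
  have hk0 : k ≠ 0 := by omega
  have hk1 : k - 1 + 1 = k := by omega
  refine ⟨veroBlock 0 k L, veroBlock (replicate (k - 1) p) 1 L, fun h => ?_,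
    ⟨0, k, hk0, by simp, rfl⟩, ⟨replicate (k - 1) p, 1, one_ne_zero, by simp [hk1], rfl⟩,
    replicate k p, ⟨p, hp, (zero_add _).symm⟩, ⟨p, hp, ?_⟩⟩
  · exact hk.ne' ((veroBlock_eq_veroBlock_iff hk0 hL).1 h).2.1
  · rw [← Multiset.replicate_add, hk1]

end Blocks

section Parallelism

variable {S : Type*} {ℒ : Set (Set S)} {par : Set S → Set S → Prop} {k : ℕ}
  {B B₁ B₂ B₃ T : Set (Multiset S)} {L : Set S}

theorem mem_veroBlocks_iff : B ∈ veroBlocks k ℒ ↔ ∃ L ∈ ℒ, HasDirection k B L := by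
  simp only [hasDirection_iff]
  constructor
  · rintro ⟨r, e, L, hr, hrk, hcard, hL, hB⟩
    exact ⟨L, hL, r, e, hr, hrk, hcard, hB⟩
  · rintro ⟨L, hL, r, e, hr, hrk, hcard, hB⟩
    exact ⟨r, e, L, hr, hrk, hcard, hL, hB⟩

theorem vPar_iff : VPar k ℒ par B₁ B₂ ↔
    ∃ L₁ ∈ ℒ, ∃ L₂ ∈ ℒ, par L₁ L₂ ∧ HasDirection k B₁ L₁ ∧ HasDirection k B₂ L₂ := by
  simp only [hasDirection_iff]
  constructor
  · rintro ⟨r₁, r₂, e₁, e₂, L₁, L₂, hr₁, hrk₁, hcard₁, hr₂, hrk₂, hcard₂, hL₁, hL₂, hL, hB₁, hB₂⟩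
    exact ⟨L₁, hL₁, L₂, hL₂, hL, ⟨r₁, e₁, hr₁, hrk₁, hcard₁, hB₁⟩, r₂, e₂, hr₂, hrk₂, hcard₂, hB₂⟩
  · rintro ⟨L₁, hL₁, L₂, hL₂, hL, ⟨r₁, e₁, hr₁, hrk₁, hcard₁, hB₁⟩, r₂, e₂, hr₂, hrk₂, hcard₂, hB₂⟩
    exact ⟨r₁, r₂, e₁, e₂, L₁, L₂, hr₁, hrk₁, hcard₁, hr₂, hrk₂, hcard₂, hL₁, hL₂, hL, hB₁, hB₂⟩

theorem vPar_refl (hrefl : ∀ L ∈ ℒ, par L L) (hB : B ∈ veroBlocks k ℒ) : VPar k ℒ par B B :=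
  let ⟨L, hL, hBL⟩ := mem_veroBlocks_iff.1 hB
  vPar_iff.2 ⟨L, hL, L, hL, hrefl L hL, hBL, hBL⟩

theorem VPar.symm (hsymm : ∀ L M : Set S, par L M → par M L) (h : VPar k ℒ par B₁ B₂) :
    VPar k ℒ par B₂ B₁ :=
  let ⟨L₁, hL₁, L₂, hL₂, hL, hB₁, hB₂⟩ := vPar_iff.1 h
  vPar_iff.2 ⟨L₂, hL₂, L₁, hL₁, hsymm L₁ L₂ hL, hB₂, hB₁⟩

theorem VPar.trans (hnontrivial : ∀ L ∈ ℒ, L.Nontrivial)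
    (htrans : ∀ L M N : Set S, par L M → par M N → par L N)
    (h₁₂ : VPar k ℒ par B₁ B₂) (h₂₃ : VPar k ℒ par B₂ B₃) : VPar k ℒ par B₁ B₃ := by
  obtain ⟨L₁, hL₁, L₂, hL₂, hL₁₂, hB₁, hB₂⟩ := vPar_iff.1 h₁₂
  obtain ⟨L₂', -, L₃, hL₃, hL₂₃, hB₂', hB₃⟩ := vPar_iff.1 h₂₃
  obtain rfl := hB₂.unique hB₂' (hnontrivial L₂ hL₂)
  exact vPar_iff.2 ⟨L₁, hL₁, L₃, hL₃, htrans L₁ L₂ L₃ hL₁₂ hL₂₃, hB₁, hB₃⟩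

theorem existsUnique_par_mem (hsymm : ∀ L M : Set S, par L M → par M L)
    (htrans : ∀ L M N : Set S, par L M → par M N → par L N)
    (hdisj : ∀ L M : Set S, par L M → L ≠ M → L ∩ M = ∅)
    (hcover : ∀ p : S, ∃ M, par L M ∧ p ∈ M) (y : S) : ∃! M, par M L ∧ y ∈ M := by
  obtain ⟨M, hLM, hyM⟩ := hcover y
  refine ⟨M, ⟨hsymm L M hLM, hyM⟩, fun N ⟨hNL, hyN⟩ => by_contra fun hNM => ?_⟩
  have hdisjNM : N ∩ M = ∅ := hdisj N M (htrans N L M hNL hLM) hNM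
  exact hdisjNM.subset ⟨hyN, hyM⟩

theorem existsUnique_vPar_mem_subset_leaf (hnontrivial : ∀ L ∈ ℒ, L.Nontrivial)
    (hmem : ∀ L M : Set S, par L M → L ∈ ℒ)
    (hsymm : ∀ L M : Set S, par L M → par M L)
    (htrans : ∀ L M N : Set S, par L M → par M N → par L N)
    (hdisj : ∀ L M : Set S, par L M → L ≠ M → L ∩ M = ∅)
    (hcover : ∀ L ∈ ℒ, ∀ p : S, ∃ M, par L M ∧ p ∈ M)
    (hB : B ∈ veroBlocks k ℒ) (hT : T ∈ veroLeaves S k) {f : Multiset S} (hf : f ∈ T) :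
    ∃! B', B' ∈ veroBlocks k ℒ ∧ f ∈ B' ∧ B' ⊆ T ∧ VPar k ℒ par B' B := by
  obtain ⟨L, hL, hBL⟩ := mem_veroBlocks_iff.1 hB
  obtain ⟨e, r, hr, hcard, rfl⟩ := mem_veroLeaves_iff.1 hT
  obtain ⟨y, -, rfl⟩ := hf
  obtain ⟨M, ⟨hML, hyM⟩, hMuniq⟩ := existsUnique_par_mem hsymm htrans hdisj (hcover L hL) y
  have hM : M ∈ ℒ := hmem M L hML
  have hBM : HasDirection k (veroBlock e r M) M := ⟨e, r, hr, hcard, rfl⟩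
  refine ⟨veroBlock e r M, ⟨mem_veroBlocks_iff.2 ⟨M, hM, hBM⟩, ⟨y, hyM, rfl⟩,
    veroBlock_mono_s18 M.subset_univ, vPar_iff.2 ⟨M, hM, L, hL, hML, hBM, hBL⟩⟩, ?_⟩
  rintro B' ⟨-, hyB', hB'T, hB'B⟩
  obtain ⟨N, hN, L', -, hNL', hB'N, hBL'⟩ := vPar_iff.1 hB'B
  obtain rfl := hBL.unique hBL' (hnontrivial L hL)
  obtain rfl := hB'N.eq_veroBlock_of_subset (hnontrivial N hN) hB'T
  rw [hMuniq N ⟨hNL', (add_replicate_mem_veroBlock_iff hr).1 hyB'⟩]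

end Parallelism

theorem stmt_18_general {S : Type*} (ℒ : Set (Set S)) (par : Set S → Set S → Prop)
    (hne : ℒ.Nonempty) (hnontrivial : ∀ L ∈ ℒ, L.Nontrivial)
    (hmem : ∀ L M : Set S, par L M → L ∈ ℒ ∧ M ∈ ℒ)
    (hrefl : ∀ L ∈ ℒ, par L L)
    (hsymm : ∀ L M : Set S, par L M → par M L)
    (htrans : ∀ L M N : Set S, par L M → par M N → par L N)
    (hdisj : ∀ L M : Set S, par L M → L ≠ M → L ∩ M = ∅)
    (hcover : ∀ L ∈ ℒ, ∀ p : S, ∃ M, par L M ∧ p ∈ M)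
    (k : ℕ) (hk : 1 < k) :
    ((∀ B ∈ veroBlocks k ℒ, VPar k ℒ par B B) ∧
     (∀ B₁ B₂ : Set (Multiset S), VPar k ℒ par B₁ B₂ → VPar k ℒ par B₂ B₁) ∧
     (∀ B₁ B₂ B₃ : Set (Multiset S),
        VPar k ℒ par B₁ B₂ → VPar k ℒ par B₂ B₃ → VPar k ℒ par B₁ B₃) ∧
     (∀ B ∈ veroBlocks k ℒ, ∀ f ∈ veroPoints S k, ∃ B', VPar k ℒ par B B' ∧ f ∈ B')) ∧
    (∀ B ∈ veroBlocks k ℒ, ∀ f ∈ veroPoints S k, ∀ T ∈ veroLeaves S k, f ∈ T →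
      ∃! B' : Set (Multiset S),
        B' ∈ veroBlocks k ℒ ∧ f ∈ B' ∧ B' ⊆ T ∧ VPar k ℒ par B' B) ∧
    (∃ B₁ B₂ : Set (Multiset S), B₁ ∈ veroBlocks k ℒ ∧ B₂ ∈ veroBlocks k ℒ ∧
      B₁ ≠ B₂ ∧ VPar k ℒ par B₁ B₂ ∧ (B₁ ∩ B₂).Nonempty) := by
  have existsUnique_in_leaf {B T f} (hB : B ∈ veroBlocks k ℒ) (hT : T ∈ veroLeaves S k)
      (hf : f ∈ T) : ∃! B', B' ∈ veroBlocks k ℒ ∧ f ∈ B' ∧ B' ⊆ T ∧ VPar k ℒ par B' B :=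
    existsUnique_vPar_mem_subset_leaf hnontrivial (fun L M h => (hmem L M h).1)
      hsymm htrans hdisj hcover hB hT hf
  refine ⟨⟨fun _ => vPar_refl hrefl, fun _ _ => VPar.symm hsymm,
    fun _ _ _ => VPar.trans hnontrivial htrans, fun B hB f hf => ?_⟩,
    fun B hB f _ T hT hfT => existsUnique_in_leaf hB hT hfT, ?_⟩
  · obtain ⟨T, hT, hfT⟩ := exists_mem_veroLeaves_mem (by omega) hf
    obtain ⟨B', ⟨-, hfB', -, hB'B⟩, -⟩ := existsUnique_in_leaf hB hT hfT
    exact ⟨B', hB'B.symm hsymm, hfB'⟩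
  · obtain ⟨L, hL⟩ := hne
    obtain ⟨B₁, B₂, hB, hB₁, hB₂, hinter⟩ :=
      exists_ne_hasDirection_inter_nonempty hk (hnontrivial L hL)
    exact ⟨B₁, B₂, mem_veroBlocks_iff.2 ⟨L, hL, hB₁⟩, mem_veroBlocks_iff.2 ⟨L, hL, hB₂⟩, hB,
      vPar_iff.2 ⟨L, hL, L, hL, hrefl L hL, hB₁, hB₂⟩, hinter⟩

theorem stmt_18 {S : Type*} (ℒ : Set (Set S)) (par : Set S → Set S → Prop)
    (hPLS : IsPLS ℒ)
    (hmem : ∀ L M : Set S, par L M → L ∈ ℒ ∧ M ∈ ℒ)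
    (hrefl : ∀ L ∈ ℒ, par L L)
    (hsymm : ∀ L M : Set S, par L M → par M L)
    (htrans : ∀ L M N : Set S, par L M → par M N → par L N)
    (hdisj : ∀ L M : Set S, par L M → L ≠ M → L ∩ M = ∅)
    (hcover : ∀ L ∈ ℒ, ∀ p : S, ∃ M, par L M ∧ p ∈ M)
    (k : ℕ) (hk : 1 < k) :
    ((∀ B ∈ veroBlocks k ℒ, VPar k ℒ par B B) ∧
     (∀ B₁ B₂ : Set (Multiset S), VPar k ℒ par B₁ B₂ → VPar k ℒ par B₂ B₁) ∧
     (∀ B₁ B₂ B₃ : Set (Multiset S),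
        VPar k ℒ par B₁ B₂ → VPar k ℒ par B₂ B₃ → VPar k ℒ par B₁ B₃) ∧
     (∀ B ∈ veroBlocks k ℒ, ∀ f ∈ veroPoints S k, ∃ B', VPar k ℒ par B B' ∧ f ∈ B')) ∧
    (∀ B ∈ veroBlocks k ℒ, ∀ f ∈ veroPoints S k, ∀ T ∈ veroLeaves S k, f ∈ T →
      ∃! B' : Set (Multiset S),
        B' ∈ veroBlocks k ℒ ∧ f ∈ B' ∧ B' ⊆ T ∧ VPar k ℒ par B' B) ∧
    (∃ B₁ B₂ : Set (Multiset S), B₁ ∈ veroBlocks k ℒ ∧ B₂ ∈ veroBlocks k ℒ ∧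
      B₁ ≠ B₂ ∧ VPar k ℒ par B₁ B₂ ∧ (B₁ ∩ B₂).Nonempty) :=
  stmt_18_general ℒ par hPLS.1 (fun L hL => (hPLS.2.1 L hL).nontrivial)
    hmem hrefl hsymm htrans hdisj hcover k hk
end
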